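/- arXiv:2407.15413 — 2 statements merged into one kernel-verified Lean document; each statement's English description precedes it below -/
import Mathlib

section
/- For two d×d separable states ρ and any orthonormal Hermitian bases (LOO) 𝐆_A, 𝐆_B on each factor, the total QFI satisfies Σ_μ F(ρ, (G_A)_μ ⊗ 𝟙 + 𝟙 ⊗ (G_B)_μ) ≤ 2(d−1). -/
/-!
For a skew-Hermitian matrix `M`, the functional `Φ σ = Re Tr σ([M, A] + M²)` is linear in the state
`σ`, and expanding `Re Tr σ XᴴX ≥ 0` for `X = A - Tr(σA) + M` shows that `Φ σ` is at most the
variance of `A` in `σ`. The quantum Fisher information of `ρ` is the value at `ρ` of `Φ` for one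
particular `M`, a multiple of the symmetric logarithmic derivative of `ρ`. Linearity thus bounds the
total Fisher information of a mixture by the largest total variance among its constituents.

For separable `ρ` the constituents can be taken to be products of pure states, on which variances of
local sums add. Finally, completeness of a local orthonormal basis of `d × d` matrices gives
`∑ Gμ² = d` and `∑ Tr(πGμ)² = Tr π²`, so the total variance in a pure state `π` is `d - 1`.
-/

open Matrix BigOperators Kronecker

/-- Quantum Fisher information of an observable `A` with respect to a state
given by spectral data: eigenvalues `lam` and orthonormal eigenvectors `v`. -/
noncomputable def qfi {n : Type*} [Fintype n] (lam : n → ℝ) (v : n → n → ℂ)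
    (A : Matrix n n ℂ) : ℝ :=
  ∑ k, ∑ l, (lam k - lam l) ^ 2 / (2 * (lam k + lam l)) *
    ‖star (v k) ⬝ᵥ (A *ᵥ v l)‖ ^ 2

section StateVariance

open ComplexOrder

variable {n : Type*} [Fintype n]

/-- The variance `Tr(ρA²) - Tr(ρA)²` of the observable `A` in the state `ρ`. For Hermitian `ρ` and
`A` the expression is already real, and taking the real part only changes its type. -/
noncomputable def stateVariance (ρ A : Matrix n n ℂ) : ℝ :=
  ((ρ * (A * A)).trace - (ρ * A).trace ^ 2).re

/-- The functional `σ ↦ Re Tr σ([M, A] + M²)` on states, for an observable `A` and a skew-Hermitian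
matrix `M`. It bounds the variance of `A` from below, and attains the quantum Fisher information for
`M = -iL/2`, where `L` is the symmetric logarithmic derivative. -/
noncomputable def sldFunctional (A M : Matrix n n ℂ) : Matrix n n ℂ →ₗ[ℝ] ℝ :=
  Complex.reLm ∘ₗ traceLinearMap n ℝ ℂ ∘ₗ LinearMap.mulRight ℝ (⁅M, A⁆ + M * M)

lemma sldFunctional_apply (A M σ : Matrix n n ℂ) :
    sldFunctional A M σ = (σ * (⁅M, A⁆ + M * M)).trace.re := rfl

lemma sldFunctional_le_stateVariance {σ A M : Matrix n n ℂ} (hσ : σ.PosSemidef)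
    (htr : σ.trace = 1) (hA : A.IsHermitian) (hM : Mᴴ = -M) :
    sldFunctional A M σ ≤ stateVariance σ A := by
  classical
  set a := (σ * A).trace with ha
  have ha_real : star a = a := by
    rw [ha, ← trace_conjTranspose, conjTranspose_mul, hA.eq, hσ.isHermitian.eq, trace_mul_comm]
  set X := A - a • 1 + M with hX
  have hX_star : Xᴴ = A - a • 1 - M := by
    rw [hX, conjTranspose_add, conjTranspose_sub, conjTranspose_smul, conjTranspose_one, hA.eq, hM,
      ha_real, sub_eq_add_neg (A - a • 1)]
  have hexpand : Xᴴ * X = A * A - (2 * a) • A + (a ^ 2) • 1 - (⁅M, A⁆ + M * M) := by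
    rw [hX_star, hX, Ring.lie_def]
    simp only [mul_add, mul_sub, sub_mul, smul_mul_assoc, mul_smul_comm, one_mul, mul_one]
    module
  have hnonneg : 0 ≤ (σ * (Xᴴ * X)).trace.re := by
    rw [← Matrix.mul_assoc, trace_mul_comm, ← Matrix.mul_assoc]
    exact (Complex.nonneg_iff.1 (hσ.mul_mul_conjTranspose_same X).trace_nonneg).1
  have htrace : (σ * (Xᴴ * X)).trace
      = (σ * (A * A)).trace - a ^ 2 - (σ * (⁅M, A⁆ + M * M)).trace := by
    rw [hexpand, mul_sub, mul_add, mul_sub, mul_smul_comm, mul_smul_comm, mul_one, trace_sub,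
      trace_add, trace_sub, trace_smul, trace_smul, htr, ← ha, smul_eq_mul, smul_eq_mul]
    ring
  rw [htrace, Complex.sub_re] at hnonneg
  rw [sldFunctional_apply, stateVariance]
  linarith

end StateVariance

section SLD

variable {n : Type*}

/-- The ratio `(lam k - lam l) / (lam k + lam l)` of the entries of `-iL/2` to those of the
observable, in the eigenbasis of the state, `L` being the symmetric logarithmic derivative. On the
kernel of the state, where the ratio is `0 / 0`, it is `0`. -/
noncomputable def sldRatio (lam : n → ℝ) (k l : n) : ℝ :=
  (lam k - lam l) / (lam k + lam l)

lemma sldRatio_swap (lam : n → ℝ) (k l : n) : sldRatio lam l k = -sldRatio lam k l := by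
  rw [sldRatio, sldRatio, ← neg_div, neg_sub, add_comm]

/-- The matrix `-iL/2`, where `L` is the symmetric logarithmic derivative at the diagonal state with
eigenvalues `lam` along the unitary flow generated by the observable `A`. -/
noncomputable def skewSLD (lam : n → ℝ) (A : Matrix n n ℂ) : Matrix n n ℂ :=
  of fun k l => (sldRatio lam k l : ℂ) * A k l

lemma skewSLD_apply (lam : n → ℝ) (A : Matrix n n ℂ) (k l : n) :
    skewSLD lam A k l = (sldRatio lam k l : ℂ) * A k l := rfl

lemma conjTranspose_skewSLD (lam : n → ℝ) {A : Matrix n n ℂ} (hA : A.IsHermitian) :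
    (skewSLD lam A)ᴴ = -skewSLD lam A := by
  ext k l
  rw [conjTranspose_apply, Matrix.neg_apply, skewSLD_apply, skewSLD_apply, star_mul', hA.apply,
    Complex.star_def, Complex.conj_ofReal, sldRatio_swap lam k l, Complex.ofReal_neg, neg_mul]

variable [Fintype n]

lemma lie_skewSLD_add_sq_apply_self (lam : n → ℝ) {A : Matrix n n ℂ} (hA : A.IsHermitian) (k : n) :
    (⁅skewSLD lam A, A⁆ + skewSLD lam A * skewSLD lam A) k k
      = ((∑ l, (2 * sldRatio lam k l - sldRatio lam k l ^ 2) * ‖A k l‖ ^ 2 : ℝ) : ℂ) := by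
  have hA_mul (l) : A k l * A l k = (‖A k l‖ : ℂ) ^ 2 := by
    rw [← hA.apply l k, Complex.star_def, Complex.mul_conj, Complex.normSq_eq_norm_sq,
      Complex.ofReal_pow]
  simp only [Ring.lie_def, Matrix.add_apply, Matrix.sub_apply, mul_apply,
    ← Finset.sum_sub_distrib, ← Finset.sum_add_distrib, skewSLD_apply, Complex.ofReal_sum]
  refine Finset.sum_congr rfl fun l _ => ?_
  rw [sldRatio_swap lam k l]
  push_cast
  rw [← hA_mul]
  ring

lemma sum_sum_eq_of_add_swap {f g : n → n → ℝ} (h : ∀ k l, f k l + f l k = 2 * g k l) :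
    ∑ k, ∑ l, f k l = ∑ k, ∑ l, g k l := by
  have hdouble : ∑ k, ∑ l, f k l + ∑ k, ∑ l, f k l = 2 * ∑ k, ∑ l, g k l := by
    nth_rewrite 2 [Finset.sum_comm]
    simp only [← Finset.sum_add_distrib, h, Finset.mul_sum]
  linarith

lemma sum_mul_sldRatio_sub_sq (lam : n → ℝ) {w : n → n → ℝ} (hw : ∀ k l, w k l = w l k) :
    ∑ k, ∑ l, lam k * ((2 * sldRatio lam k l - sldRatio lam k l ^ 2) * w k l)
      = ∑ k, ∑ l, (lam k - lam l) ^ 2 / (2 * (lam k + lam l)) * w k l := by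
  refine sum_sum_eq_of_add_swap fun k l => ?_
  rw [sldRatio_swap lam k l, hw l k, sldRatio]
  by_cases h0 : lam k + lam l = 0
  · simp [h0]
  · field_simp
    ring

variable [DecidableEq n]

lemma sldFunctional_skewSLD_diagonal (lam : n → ℝ) {A : Matrix n n ℂ} (hA : A.IsHermitian) :
    sldFunctional A (skewSLD lam A) (diagonal fun k => (lam k : ℂ))
      = ∑ k, ∑ l, (lam k - lam l) ^ 2 / (2 * (lam k + lam l)) * ‖A k l‖ ^ 2 := by
  rw [← sum_mul_sldRatio_sub_sq lam fun k l => by rw [← hA.apply, norm_star], sldFunctional_apply,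
    trace, Complex.re_sum]
  refine Finset.sum_congr rfl fun k _ => ?_
  rw [diag_apply, diagonal_mul, lie_skewSLD_add_sq_apply_self lam hA, ← Complex.ofReal_mul,
    Complex.ofReal_re, Finset.mul_sum]

lemma trace_conjStarAlgAut (V : unitaryGroup n ℂ) (X : Matrix n n ℂ) :
    (Unitary.conjStarAlgAut ℝ _ V X).trace = X.trace := by
  rw [Unitary.conjStarAlgAut_apply, trace_mul_cycle, Unitary.coe_star_mul_self, one_mul]

lemma sldFunctional_conjStarAlgAut (V : unitaryGroup n ℂ) (A M σ : Matrix n n ℂ) :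
    sldFunctional (Unitary.conjStarAlgAut ℝ _ V A) (Unitary.conjStarAlgAut ℝ _ V M)
      (Unitary.conjStarAlgAut ℝ _ V σ) = sldFunctional A M σ := by
  simp only [sldFunctional_apply, Ring.lie_def, ← map_mul, ← map_sub, ← map_add,
    trace_conjStarAlgAut]

/-- The unitary matrix whose columns are the vectors of the orthonormal family `v`. -/
noncomputable def eigenvectorMatrix (v : n → n → ℂ)
    (hv : ∀ k l, star (v k) ⬝ᵥ v l = if k = l then 1 else 0) : unitaryGroup n ℂ :=
  ⟨(of v)ᵀ, mem_unitaryGroup_iff'.2 <| by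
    ext k l
    rw [one_apply, ← hv]
    rfl⟩

lemma conjStarAlgAut_eigenvectorMatrix_diagonal (lam : n → ℝ) {v : n → n → ℂ}
    (hv : ∀ k l, star (v k) ⬝ᵥ v l = if k = l then 1 else 0) :
    Unitary.conjStarAlgAut ℝ _ (eigenvectorMatrix v hv) (diagonal fun k => (lam k : ℂ))
      = ∑ k, lam k • vecMulVec (v k) (star (v k)) := by
  ext i j
  rw [Unitary.conjStarAlgAut_apply, mul_apply, Matrix.sum_apply]
  refine Finset.sum_congr rfl fun k _ => ?_
  rw [mul_diagonal, Matrix.smul_apply, vecMulVec_apply, Complex.real_smul, mul_right_comm, mul_comm]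
  rfl

lemma exists_qfi_eq_sldFunctional (lam : n → ℝ) {v : n → n → ℂ}
    (hv : ∀ k l, star (v k) ⬝ᵥ v l = if k = l then 1 else 0)
    {A : Matrix n n ℂ} (hA : A.IsHermitian) :
    ∃ M : Matrix n n ℂ, Mᴴ = -M ∧
      qfi lam v A = sldFunctional A M (∑ k, lam k • vecMulVec (v k) (star (v k))) := by
  set c := Unitary.conjStarAlgAut ℝ (Matrix n n ℂ) (eigenvectorMatrix v hv) with hc
  set B := c.symm A with hB
  have hBH : B.IsHermitian := by
    rw [Matrix.IsHermitian, ← star_eq_conjTranspose, hB, ← map_star, star_eq_conjTranspose, hA.eq]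
  have hBentry (k l) : B k l = star (v k) ⬝ᵥ (A *ᵥ v l) := by
    rw [hB, hc, Unitary.conjStarAlgAut_symm_apply, Matrix.mul_assoc, mul_apply]
    rfl
  refine ⟨c (skewSLD lam B), ?_, ?_⟩
  · rw [← star_eq_conjTranspose, ← map_star, star_eq_conjTranspose, conjTranspose_skewSLD lam hBH,
      map_neg]
  · calc
      qfi lam v A
        = ∑ k, ∑ l, (lam k - lam l) ^ 2 / (2 * (lam k + lam l)) * ‖B k l‖ ^ 2 := by
          simp only [qfi, hBentry]
      _ = sldFunctional B (skewSLD lam B) (diagonal fun k => (lam k : ℂ)) :=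
          (sldFunctional_skewSLD_diagonal lam hBH).symm
      _ = sldFunctional (c B) (c (skewSLD lam B)) (c (diagonal fun k => (lam k : ℂ))) :=
          (sldFunctional_conjStarAlgAut ..).symm
      _ = sldFunctional A (c (skewSLD lam B)) (∑ k, lam k • vecMulVec (v k) (star (v k))) := by
          rw [hB, c.apply_symm_apply, conjStarAlgAut_eigenvectorMatrix_diagonal]

open ComplexOrder in
lemma sum_qfi_le_of_mem_convexHull {ι : Type*} [Fintype ι] (lam : n → ℝ) {v : n → n → ℂ}
    (hv : ∀ k l, star (v k) ⬝ᵥ v l = if k = l then 1 else 0)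
    {A : ι → Matrix n n ℂ} (hA : ∀ μ, (A μ).IsHermitian) {S : Set (Matrix n n ℂ)} {s : ℝ}
    (hS : ∀ σ ∈ S, σ.PosSemidef ∧ σ.trace = 1) (hs : ∀ σ ∈ S, ∑ μ, stateVariance σ (A μ) ≤ s)
    (hmem : ∑ k, lam k • vecMulVec (v k) (star (v k)) ∈ convexHull ℝ S) :
    ∑ μ, qfi lam v (A μ) ≤ s := by
  choose M hM hqfi using fun μ => exists_qfi_eq_sldFunctional lam hv (hA μ)
  have hbound : ∀ σ ∈ S, (∑ μ, sldFunctional (A μ) (M μ)) σ ≤ s := fun σ hσ => by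
    rw [LinearMap.sum_apply]
    exact (Finset.sum_le_sum fun μ _ => sldFunctional_le_stateVariance (hS σ hσ).1 (hS σ hσ).2
      (hA μ) (hM μ)).trans (hs σ hσ)
  simp only [hqfi, ← LinearMap.sum_apply]
  exact convexHull_min hbound (convex_halfSpace_le (LinearMap.isLinear _) s) hmem

end SLD

section PureState

open ComplexOrder

/-- A pure state, encoded as an orthogonal projection of rank (that is, trace) one. -/
structure IsPureState {n : Type*} [Fintype n] (π : Matrix n n ℂ) : Prop where
  isStarProjection : IsStarProjection π
  trace_eq_one : π.trace = 1

variable {m n : Type*} [Fintype m] [Fintype n]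

namespace IsPureState

lemma posSemidef {π : Matrix n n ℂ} (hπ : IsPureState π) : π.PosSemidef := by
  have h := posSemidef_conjTranspose_mul_self π
  rwa [← star_eq_conjTranspose, hπ.isStarProjection.isSelfAdjoint.star_eq,
    hπ.isStarProjection.isIdempotentElem.eq] at h

lemma kronecker {α : Matrix m m ℂ} {β : Matrix n n ℂ} (hα : IsPureState α) (hβ : IsPureState β) :
    IsPureState (α ⊗ₖ β) where
  isStarProjection.isIdempotentElem := by
    rw [IsIdempotentElem, ← mul_kronecker_mul, hα.isStarProjection.isIdempotentElem.eq,
      hβ.isStarProjection.isIdempotentElem.eq]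
  isStarProjection.isSelfAdjoint := by
    rw [isSelfAdjoint_iff, star_eq_conjTranspose, conjTranspose_kronecker, ← star_eq_conjTranspose,
      ← star_eq_conjTranspose, hα.isStarProjection.isSelfAdjoint.star_eq,
      hβ.isStarProjection.isSelfAdjoint.star_eq]
  trace_eq_one := by rw [trace_kronecker, hα.trace_eq_one, hβ.trace_eq_one, one_mul]

variable [DecidableEq n]

lemma single (k : n) : IsPureState (single k k (1 : ℂ)) where
  isStarProjection.isIdempotentElem := by simp [IsIdempotentElem]
  isStarProjection.isSelfAdjoint := by simp [isSelfAdjoint_iff, star_eq_conjTranspose]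
  trace_eq_one := trace_single_eq_same k 1

lemma conjStarAlgAut {π : Matrix n n ℂ} (hπ : IsPureState π) (V : unitaryGroup n ℂ) :
    IsPureState (Unitary.conjStarAlgAut ℝ _ V π) :=
  ⟨hπ.isStarProjection.map _, by rw [trace_conjStarAlgAut, hπ.trace_eq_one]⟩

end IsPureState

lemma mem_convexHull_isPureState {ρ : Matrix n n ℂ} (hρ : ρ.PosSemidef) (htr : ρ.trace = 1) :
    ρ ∈ convexHull ℝ {π | IsPureState π} := by
  classical
  let w := hρ.isHermitian.eigenvalues
  have hw : ∑ k, w k = 1 := by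
    rw [← Complex.ofReal_inj, Complex.ofReal_one, ← htr, Complex.ofReal_sum]
    exact hρ.isHermitian.trace_eq_sum_eigenvalues.symm
  have hdiag : (diagonal fun k => (w k : ℂ)) = ∑ k, w k • single k k (1 : ℂ) := by
    simp only [smul_single, Complex.real_smul, mul_one, sum_single_eq_diagonal]
  have hspectral : ρ = ∑ k, w k • Unitary.conjStarAlgAut ℝ _ hρ.isHermitian.eigenvectorUnitary
      (single k k 1) := by
    simp only [← map_smul, ← map_sum, ← hdiag]
    exact hρ.isHermitian.spectral_theorem
  rw [hspectral]
  exact (convex_convexHull ℝ _).sum_mem (fun k _ => hρ.eigenvalues_nonneg k) hw fun k _ =>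
    subset_convexHull ℝ _ ((IsPureState.single k).conjStarAlgAut _)

end PureState

section Separable

open ComplexOrder

lemma apply_apply_mem_convexHull_image2 {E F G : Type*} [AddCommGroup E] [Module ℝ E]
    [AddCommGroup F] [Module ℝ F] [AddCommGroup G] [Module ℝ G] (f : E →ₗ[ℝ] F →ₗ[ℝ] G)
    {s : Set E} {t : Set F} {x : E} {y : F} (hx : x ∈ convexHull ℝ s) (hy : y ∈ convexHull ℝ t) :
    f x y ∈ convexHull ℝ (Set.image2 (f · ·) s t) := by
  have hs : s ⊆ f.flip y ⁻¹' convexHull ℝ (Set.image2 (f · ·) s t) := fun a ha => by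
    have ht : t ⊆ f a ⁻¹' convexHull ℝ (Set.image2 (f · ·) s t) := fun b hb =>
      subset_convexHull ℝ _ (Set.mem_image2_of_mem ha hb)
    exact convexHull_min ht ((convex_convexHull ℝ _).linear_preimage (f a)) hy
  exact convexHull_min hs ((convex_convexHull ℝ _).linear_preimage (f.flip y)) hx

variable {m n : Type*} [Fintype m] [Fintype n]

lemma sum_smul_kronecker_mem_convexHull {κ : Type*} [Fintype κ] {p : κ → ℝ} (hp : ∀ k, 0 ≤ p k)
    (hp1 : ∑ k, p k = 1) {ρA : κ → Matrix m m ℂ} {ρB : κ → Matrix n n ℂ}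
    (hρA : ∀ k, (ρA k).PosSemidef) (htrA : ∀ k, (ρA k).trace = 1)
    (hρB : ∀ k, (ρB k).PosSemidef) (htrB : ∀ k, (ρB k).trace = 1) :
    ∑ k, p k • (ρA k ⊗ₖ ρB k) ∈
      convexHull ℝ (Set.image2 (· ⊗ₖ ·) {α | IsPureState α} {β | IsPureState β}) := by
  refine (convex_convexHull ℝ _).sum_mem (fun k _ => hp k) hp1 fun k _ => ?_
  exact apply_apply_mem_convexHull_image2 (kroneckerBilinear (R := ℝ))
    (mem_convexHull_isPureState (hρA k) (htrA k)) (mem_convexHull_isPureState (hρB k) (htrB k))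

variable [DecidableEq m] [DecidableEq n]

lemma stateVariance_kronecker {σ : Matrix m m ℂ} {τ : Matrix n n ℂ} (hσ : σ.trace = 1)
    (hτ : τ.trace = 1) (A : Matrix m m ℂ) (B : Matrix n n ℂ) :
    stateVariance (σ ⊗ₖ τ) (A ⊗ₖ (1 : Matrix n n ℂ) + (1 : Matrix m m ℂ) ⊗ₖ B)
      = stateVariance σ A + stateVariance τ B := by
  simp only [stateVariance, ← Complex.add_re, mul_add, add_mul, ← mul_kronecker_mul, mul_one,
    one_mul, trace_add, trace_kronecker, hσ, hτ]
  ring_nf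

lemma sum_qfi_le_of_separable {ι κ : Type*} [Fintype ι] [Fintype κ] {p : κ → ℝ}
    (hp : ∀ k, 0 ≤ p k) (hp1 : ∑ k, p k = 1)
    {ρA : κ → Matrix m m ℂ} {ρB : κ → Matrix n n ℂ}
    (hρA : ∀ k, (ρA k).PosSemidef) (htrA : ∀ k, (ρA k).trace = 1)
    (hρB : ∀ k, (ρB k).PosSemidef) (htrB : ∀ k, (ρB k).trace = 1)
    {GA : ι → Matrix m m ℂ} {GB : ι → Matrix n n ℂ}
    (hGA : ∀ μ, (GA μ).IsHermitian) (hGB : ∀ μ, (GB μ).IsHermitian) {sA sB : ℝ}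
    (hsA : ∀ α, IsPureState α → ∑ μ, stateVariance α (GA μ) ≤ sA)
    (hsB : ∀ β, IsPureState β → ∑ μ, stateVariance β (GB μ) ≤ sB)
    {lam : m × n → ℝ} {v : m × n → m × n → ℂ}
    (hv : ∀ k l, star (v k) ⬝ᵥ v l = if k = l then 1 else 0)
    (hsep : ∑ k, lam k • vecMulVec (v k) (star (v k)) = ∑ k, p k • (ρA k ⊗ₖ ρB k)) :
    ∑ μ, qfi lam v (GA μ ⊗ₖ (1 : Matrix n n ℂ) + (1 : Matrix m m ℂ) ⊗ₖ GB μ) ≤ sA + sB := by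
  have hherm (μ) : (GA μ ⊗ₖ (1 : Matrix n n ℂ) + (1 : Matrix m m ℂ) ⊗ₖ GB μ).IsHermitian := by
    rw [Matrix.IsHermitian, conjTranspose_add, conjTranspose_kronecker, conjTranspose_kronecker,
      (hGA μ).eq, (hGB μ).eq, conjTranspose_one, conjTranspose_one]
  refine sum_qfi_le_of_mem_convexHull lam hv hherm ?_ ?_
    (hsep ▸ sum_smul_kronecker_mem_convexHull hp hp1 hρA htrA hρB htrB)
  · rintro _ ⟨α, hα, β, hβ, rfl⟩
    exact ⟨(hα.kronecker hβ).posSemidef, (hα.kronecker hβ).trace_eq_one⟩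
  · rintro _ ⟨α, hα, β, hβ, rfl⟩
    simp only [stateVariance_kronecker hα.trace_eq_one hβ.trace_eq_one, Finset.sum_add_distrib]
    exact add_le_add (hsA α hα) (hsB β hβ)

end Separable

section OrthonormalBasis

variable {R ι n : Type*} [CommRing R] [Fintype ι] [DecidableEq ι] [Fintype n]
  {G : ι → Matrix n n R}

lemma sum_apply_mul_apply_of_trace_mul [DecidableEq n] (hcard : Fintype.card ι = Fintype.card n ^ 2)
    (hG : ∀ μ ν, (G μ * G ν).trace = if μ = ν then 1 else 0) (a b c e : n) :
    ∑ μ, G μ b a * G μ c e = if a = c ∧ b = e then 1 else 0 := by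
  set P : Matrix ι (n × n) R := of fun μ x => G μ x.1 x.2
  set Q : Matrix (n × n) ι R := of fun x μ => G μ x.2 x.1
  have hPQ : P * Q = 1 := by
    ext μ ν
    rw [one_apply, ← hG μ ν, mul_apply, Fintype.sum_prod_type]
    rfl
  have hQP : Q * P = 1 :=
    (mul_eq_one_comm_of_card_eq _ _ _ (by rw [hcard, Fintype.card_prod, sq])).1 hPQ
  have hentry := congrFun₂ hQP (a, b) (c, e)
  simp only [one_apply, Prod.mk.injEq, mul_apply] at hentry
  exact hentry

lemma sum_mul_self_of_trace_mul [DecidableEq n] (hcard : Fintype.card ι = Fintype.card n ^ 2)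
    (hG : ∀ μ ν, (G μ * G ν).trace = if μ = ν then 1 else 0) :
    ∑ μ, G μ * G μ = (Fintype.card n : R) • 1 := by
  ext a b
  simp only [Matrix.sum_apply, mul_apply]
  rw [Finset.sum_comm]
  simp [sum_apply_mul_apply_of_trace_mul hcard hG, one_apply]

lemma sum_trace_mul_smul_of_trace_mul (hcard : Fintype.card ι = Fintype.card n ^ 2)
    (hG : ∀ μ ν, (G μ * G ν).trace = if μ = ν then 1 else 0) (X : Matrix n n R) :
    ∑ μ, (X * G μ).trace • G μ = X := by
  classical
  ext i j
  calc (∑ μ, (X * G μ).trace • G μ) i j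
      = ∑ μ, ∑ a, ∑ b, X a b * (G μ b a * G μ i j) := by
        simp only [Matrix.sum_apply, Matrix.smul_apply, smul_eq_mul, trace, diag_apply, mul_apply,
          Finset.sum_mul, mul_assoc]
    _ = ∑ a, ∑ b, X a b * ∑ μ, G μ b a * G μ i j := by
        simp only [Finset.mul_sum]
        rw [Finset.sum_comm]
        exact Finset.sum_congr rfl fun a _ => Finset.sum_comm
    _ = X i j := by
        simp [sum_apply_mul_apply_of_trace_mul hcard hG, ite_and]

lemma sum_trace_mul_sq_of_trace_mul (hcard : Fintype.card ι = Fintype.card n ^ 2)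
    (hG : ∀ μ ν, (G μ * G ν).trace = if μ = ν then 1 else 0) (X : Matrix n n R) :
    ∑ μ, (X * G μ).trace ^ 2 = (X * X).trace := by
  conv_rhs => enter [1, 2]; rw [← sum_trace_mul_smul_of_trace_mul hcard hG X]
  simp only [Matrix.mul_sum, mul_smul_comm, trace_sum, trace_smul, smul_eq_mul, sq]

end OrthonormalBasis

lemma sum_stateVariance_of_isPureState {ι n : Type*} [Fintype ι] [DecidableEq ι] [Fintype n]
    {G : ι → Matrix n n ℂ} (hcard : Fintype.card ι = Fintype.card n ^ 2)
    (hG : ∀ μ ν, (G μ * G ν).trace = if μ = ν then 1 else 0) {π : Matrix n n ℂ}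
    (hπ : IsPureState π) :
    ∑ μ, stateVariance π (G μ) = Fintype.card n - 1 := by
  classical
  have hsq : ∑ μ, (π * (G μ * G μ)).trace = Fintype.card n := by
    rw [← trace_sum, ← Matrix.mul_sum, sum_mul_self_of_trace_mul hcard hG, mul_smul_comm, mul_one,
      trace_smul, hπ.trace_eq_one, smul_eq_mul, mul_one]
  have hmean : ∑ μ, (π * G μ).trace ^ 2 = 1 := by
    rw [sum_trace_mul_sq_of_trace_mul hcard hG, hπ.isStarProjection.isIdempotentElem.eq,
      hπ.trace_eq_one]
  simp only [stateVariance]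
  rw [← Complex.re_sum, Finset.sum_sub_distrib, hsq, hmean, Complex.sub_re, Complex.natCast_re,
    Complex.one_re]

open ComplexOrder in
/-- A pair with `lam k + lam l = 0` contributes `0` to `qfi` because `x / 0 = 0`. This agrees with
the usual convention of leaving such pairs out of the sum for states without full rank. -/
theorem total_qfi_loo_separable_bound_general {ι κ m n : Type*} [Fintype ι] [DecidableEq ι]
    [Fintype κ] [Fintype m] [DecidableEq m] [Fintype n] [DecidableEq n]
    (p : κ → ℝ) (hp : ∀ k, 0 ≤ p k) (hp1 : ∑ k, p k = 1)
    (ρA : κ → Matrix m m ℂ) (ρB : κ → Matrix n n ℂ)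
    (hρA : ∀ k, (ρA k).PosSemidef) (htrA : ∀ k, (ρA k).trace = 1)
    (hρB : ∀ k, (ρB k).PosSemidef) (htrB : ∀ k, (ρB k).trace = 1)
    (hm : Fintype.card ι = Fintype.card m ^ 2) (hn : Fintype.card ι = Fintype.card n ^ 2)
    (GA : ι → Matrix m m ℂ) (GB : ι → Matrix n n ℂ)
    (hGA : ∀ μ, (GA μ).IsHermitian) (hGB : ∀ μ, (GB μ).IsHermitian)
    (horthA : ∀ μ ν, (GA μ * GA ν).trace = if μ = ν then 1 else 0)
    (horthB : ∀ μ ν, (GB μ * GB ν).trace = if μ = ν then 1 else 0)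
    (lam : m × n → ℝ) (v : m × n → m × n → ℂ)
    (hortho : ∀ k l, star (v k) ⬝ᵥ v l = if k = l then 1 else 0)
    (hsep : ∑ k, lam k • vecMulVec (v k) (star (v k)) = ∑ k, p k • (ρA k ⊗ₖ ρB k)) :
    ∑ μ, qfi lam v (GA μ ⊗ₖ (1 : Matrix n n ℂ) + (1 : Matrix m m ℂ) ⊗ₖ GB μ)
      ≤ ((Fintype.card m : ℝ) - 1) + ((Fintype.card n : ℝ) - 1) :=
  sum_qfi_le_of_separable hp hp1 hρA htrA hρB htrB hGA hGB
    (fun _ hα => (sum_stateVariance_of_isPureState hm horthA hα).le)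
    (fun _ hβ => (sum_stateVariance_of_isPureState hn horthB hβ).le) hortho hsep

open ComplexOrder in
theorem total_qfi_loo_separable_bound {d K : ℕ}
    (p : Fin K → ℝ) (hp : ∀ k, 0 ≤ p k) (hp1 : ∑ k, p k = 1)
    (ρA ρB : Fin K → Matrix (Fin d) (Fin d) ℂ)
    (hρA : ∀ k, (ρA k).PosSemidef) (htrA : ∀ k, (ρA k).trace = 1)
    (hρB : ∀ k, (ρB k).PosSemidef) (htrB : ∀ k, (ρB k).trace = 1)
    (GA GB : Fin (d ^ 2) → Matrix (Fin d) (Fin d) ℂ)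
    (hGA : ∀ μ, (GA μ).IsHermitian) (hGB : ∀ μ, (GB μ).IsHermitian)
    (horthA : ∀ μ ν, (GA μ * GA ν).trace = if μ = ν then 1 else 0)
    (horthB : ∀ μ ν, (GB μ * GB ν).trace = if μ = ν then 1 else 0)
    (lam : Fin d × Fin d → ℝ) (v : Fin d × Fin d → Fin d × Fin d → ℂ)
    (hpos : ∀ k, 0 < lam k)
    (hortho : ∀ k l, star (v k) ⬝ᵥ v l = if k = l then 1 else 0)
    (hsep : ∑ k, lam k • vecMulVec (v k) (star (v k)) = ∑ k, p k • (ρA k ⊗ₖ ρB k)) :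
    ∑ μ, qfi lam v (GA μ ⊗ₖ (1 : Matrix (Fin d) (Fin d) ℂ)
      + (1 : Matrix (Fin d) (Fin d) ℂ) ⊗ₖ GB μ) ≤ 2 * ((d : ℝ) - 1) := by
  have h := total_qfi_loo_separable_bound_general p hp hp1 ρA ρB hρA htrA hρB htrB (by simp)
    (by simp) GA GB hGA hGB horthA horthB lam v hortho hsep
  simpa only [Fintype.card_fin, ← two_mul] using h
end

section
/- For two d×d separable states and SIC-POVMs 𝐄_A, 𝐄_B on each factor, Σ_μ F(ρ, (E_A)_μ ⊗ 𝟙 + 𝟙 ⊗ (E_B)_μ) ≤ 2(d−1)/(d(d+1)). -/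
open Matrix BigOperators Kronecker

/-!
The quantum Fisher information of `ρ` is at most the average variance `∑ j, q j * Var (φ j) A` over
every ensemble `ρ = ∑ j, q j |φ j⟩⟨φ j|` of unit vectors. Indeed, adding a skew-Hermitian `S` to `A`
does not change `Re ⟨φ j, A φ j⟩`, so by Cauchy–Schwarz the average variance is at least
`tr (A ρ Aᴴ) - tr ((A + S) ρ (A + S)ᴴ)`, and this equals the Fisher information when `S` is the
symmetric logarithmic derivative of the orbit generated by `A`, divided by `2i`.

A separable `ρ` has an ensemble of product vectors `a ⊗ b`, and in such a vector the variances of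
`A ⊗ 1` and `1 ⊗ B` add up, so it remains to sum over `μ` the variances of the SIC effects in one
pure state `a`. There `Var (E μ) = (x μ - x μ ^ 2) / d ^ 2` with `x μ = |⟨ψ μ, a⟩| ^ 2`. The
projectors `|ψ μ⟩⟨ψ μ|` are `d ^ 2` linearly independent matrices, hence a basis, and expanding the
identity and `|a⟩⟨a|` in it gives `∑ μ, x μ = d` and `∑ μ, x μ ^ 2 = 2 d / (d + 1)`.
-/

lemma isHermitian_vecMulVec_star {n : Type*} (ψ : n → ℂ) :
    (vecMulVec ψ (star ψ)).IsHermitian := by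
  rw [IsHermitian, conjTranspose_vecMulVec, star_star]

section DotProduct

variable {n : Type*} [Fintype n]

lemma nonempty_of_star_dotProduct_self_eq_one {x : n → ℂ} (hx : star x ⬝ᵥ x = 1) : Nonempty n := by
  by_contra! hempty
  exact zero_ne_one ((dotProduct_of_isEmpty (star x) x).symm.trans hx)

lemma star_dotProduct_mul_comm (x y : n → ℂ) :
    (star x ⬝ᵥ y) * (star y ⬝ᵥ x) = ((‖star x ⬝ᵥ y‖ ^ 2 : ℝ) : ℂ) := by
  rw [star_dotProduct y x, Complex.star_def, Complex.mul_conj', Complex.ofReal_pow]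

lemma sq_re_star_dotProduct_le (x y : n → ℂ) :
    (star x ⬝ᵥ y).re ^ 2 ≤ (star x ⬝ᵥ x).re * (star y ⬝ᵥ y).re := by
  have hCS := inner_mul_inner_self_le (𝕜 := ℂ) (WithLp.toLp 2 x) (WithLp.toLp 2 y)
  rw [norm_inner_symm (WithLp.toLp 2 y), ← sq] at hCS
  simp only [EuclideanSpace.inner_toLp_toLp, dotProduct_comm _ (star _)] at hCS
  calc (star x ⬝ᵥ y).re ^ 2 = |(star x ⬝ᵥ y).re| ^ 2 := (sq_abs _).symm
    _ ≤ ‖star x ⬝ᵥ y‖ ^ 2 := by gcongr; exact Complex.abs_re_le_norm _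
    _ ≤ _ := hCS

lemma star_dotProduct_vecMulVec_mulVec (x y ψ : n → ℂ) :
    star x ⬝ᵥ (vecMulVec ψ (star ψ) *ᵥ y) = (star x ⬝ᵥ ψ) * (star ψ ⬝ᵥ y) := by
  rw [vecMulVec_mulVec, dotProduct_smul, MulOpposite.smul_eq_mul_unop, MulOpposite.unop_op]

lemma star_dotProduct_conjTranspose_mulVec (A : Matrix n n ℂ) (x y : n → ℂ) :
    star x ⬝ᵥ (Aᴴ *ᵥ y) = star (A *ᵥ x) ⬝ᵥ y := by
  rw [star_mulVec, dotProduct_mulVec]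

lemma re_star_dotProduct_mulVec_eq_zero {S : Matrix n n ℂ} (hS : Sᴴ = -S) (x : n → ℂ) :
    (star x ⬝ᵥ (S *ᵥ x)).re = 0 := by
  have h := congrArg Complex.re (star_dotProduct_conjTranspose_mulVec S x x)
  rw [hS, neg_mulVec, dotProduct_neg, star_dotProduct (S *ᵥ x), Complex.star_def,
    Complex.conj_re, Complex.neg_re] at h
  linarith

lemma im_star_dotProduct_mulVec_eq_zero {A : Matrix n n ℂ} (hA : A.IsHermitian) (x : n → ℂ) :
    (star x ⬝ᵥ (A *ᵥ x)).im = 0 := by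
  rw [← Complex.conj_eq_iff_im, ← Complex.star_def, ← star_dotProduct,
    ← star_dotProduct_conjTranspose_mulVec, hA.eq]

end DotProduct

section PureVariance

variable {n : Type*} [Fintype n]

/-- The variance `‖A φ‖² - ⟨φ, A φ⟩²` of an observable `A` in the pure state `φ`. Only the real part
of the expectation is taken, which loses nothing for Hermitian `A`. -/
noncomputable def pureVariance (φ : n → ℂ) (A : Matrix n n ℂ) : ℝ :=
  (star (A *ᵥ φ) ⬝ᵥ (A *ᵥ φ)).re - (star φ ⬝ᵥ (A *ᵥ φ)).re ^ 2

lemma pureVariance_ofReal_smul (φ : n → ℂ) (c : ℝ) (A : Matrix n n ℂ) :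
    pureVariance φ ((c : ℂ) • A) = c ^ 2 * pureVariance φ A := by
  simp only [pureVariance, smul_mulVec, star_smul, smul_dotProduct, dotProduct_smul, smul_eq_mul,
    Complex.star_def, Complex.conj_ofReal, Complex.re_ofReal_mul]
  ring

lemma pureVariance_vecMulVec_star {ψ : n → ℂ} (hψ : star ψ ⬝ᵥ ψ = 1) (φ : n → ℂ) :
    pureVariance φ (vecMulVec ψ (star ψ)) = ‖star ψ ⬝ᵥ φ‖ ^ 2 - (‖star ψ ⬝ᵥ φ‖ ^ 2) ^ 2 := by
  have hmean : star φ ⬝ᵥ (vecMulVec ψ (star ψ) *ᵥ φ) = ((‖star ψ ⬝ᵥ φ‖ ^ 2 : ℝ) : ℂ) := by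
    rw [star_dotProduct_vecMulVec_mulVec, mul_comm, star_dotProduct_mul_comm]
  have hsq : star (vecMulVec ψ (star ψ) *ᵥ φ) ⬝ᵥ (vecMulVec ψ (star ψ) *ᵥ φ)
      = ((‖star ψ ⬝ᵥ φ‖ ^ 2 : ℝ) : ℂ) := by
    rw [← star_dotProduct_conjTranspose_mulVec, (isHermitian_vecMulVec_star ψ).eq, mulVec_mulVec,
      vecMulVec_mul_vecMulVec, hψ, one_smul, hmean]
  rw [pureVariance, hsq, hmean, Complex.ofReal_re]

end PureVariance

section ProdVec

variable {m n : Type*}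

/-- The product vector `a ⊗ b`, in the coordinates used by the Kronecker product `⊗ₖ`. -/
def prodVec (a : m → ℂ) (b : n → ℂ) : m × n → ℂ := fun i => a i.1 * b i.2

lemma vecMulVec_prodVec (a : m → ℂ) (b : n → ℂ) :
    vecMulVec (prodVec a b) (star (prodVec a b))
      = vecMulVec a (star a) ⊗ₖ vecMulVec b (star b) := by
  ext i j
  simp only [vecMulVec_apply, kroneckerMap_apply, prodVec, Pi.star_apply, star_mul']
  ring

variable [Fintype m] [Fintype n]

lemma star_prodVec_dotProduct (a a' : m → ℂ) (b b' : n → ℂ) :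
    star (prodVec a b) ⬝ᵥ prodVec a' b' = (star a ⬝ᵥ a') * (star b ⬝ᵥ b') := by
  simp only [dotProduct, Finset.sum_mul_sum, Fintype.sum_prod_type, prodVec, Pi.star_apply,
    star_mul', mul_mul_mul_comm]

lemma kronecker_mulVec_prodVec (A : Matrix m m ℂ) (B : Matrix n n ℂ) (a : m → ℂ) (b : n → ℂ) :
    (A ⊗ₖ B) *ᵥ prodVec a b = prodVec (A *ᵥ a) (B *ᵥ b) := by
  ext i
  simp only [mulVec, dotProduct, Finset.sum_mul_sum, Fintype.sum_prod_type, prodVec,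
    kroneckerMap_apply, mul_mul_mul_comm]

lemma pureVariance_prodVec [DecidableEq m] [DecidableEq n] {a : m → ℂ} {b : n → ℂ}
    (ha : star a ⬝ᵥ a = 1) (hb : star b ⬝ᵥ b = 1) {A : Matrix m m ℂ} (hA : A.IsHermitian)
    (B : Matrix n n ℂ) :
    pureVariance (prodVec a b) (A ⊗ₖ 1 + 1 ⊗ₖ B) = pureVariance a A + pureVariance b B := by
  have himA := im_star_dotProduct_mulVec_eq_zero hA a
  simp only [pureVariance, add_mulVec, kronecker_mulVec_prodVec, one_mulVec, star_add,
    add_dotProduct, dotProduct_add, star_prodVec_dotProduct, ha, hb, mul_one, one_mul,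
    star_dotProduct (A *ᵥ a) a, star_dotProduct (B *ᵥ b) b, Complex.star_def, Complex.add_re,
    Complex.mul_re, Complex.conj_re, Complex.conj_im, himA]
  ring

end ProdVec

section PureEnsemble

variable {m n I J : Type*} [Fintype m] [Fintype n] [Fintype I] [Fintype J]

/-- A decomposition `ρ = ∑ j, q j |φ j⟩⟨φ j|` of a positive operator into unit vectors with
nonnegative weights. The weights are not required to sum to one: their sum is `ρ.trace`. -/
structure IsPureEnsemble (q : J → ℝ) (φ : J → n → ℂ) (ρ : Matrix n n ℂ) : Prop where
  nonneg : ∀ j, 0 ≤ q j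
  unit : ∀ j, star (φ j) ⬝ᵥ φ j = 1
  sum_eq : ∑ j, q j • vecMulVec (φ j) (star (φ j)) = ρ

lemma mul_diagonal_mul_conjTranspose [DecidableEq n] (V : Matrix n n ℂ) (lam : n → ℝ) :
    V * diagonal (fun k => (lam k : ℂ)) * Vᴴ
      = ∑ k, lam k • vecMulVec (Vᵀ k) (star (Vᵀ k)) := by
  ext i j
  rw [mul_apply, Matrix.sum_apply]
  refine Finset.sum_congr rfl fun k _ => ?_
  rw [mul_diagonal, conjTranspose_apply, Matrix.smul_apply, vecMulVec_apply, Complex.real_smul,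
    Pi.star_apply, transpose_apply, transpose_apply]
  ring

open ComplexOrder in
lemma exists_isPureEnsemble {ρ : Matrix n n ℂ} (hρ : ρ.PosSemidef) :
    ∃ (q : n → ℝ) (φ : n → n → ℂ), IsPureEnsemble q φ ρ := by
  classical
  have hspec := hρ.1.spectral_theorem
  rw [Unitary.conjStarAlgAut_apply, star_eq_conjTranspose] at hspec
  refine ⟨hρ.1.eigenvalues, (hρ.1.eigenvectorUnitary : Matrix n n ℂ)ᵀ, hρ.eigenvalues_nonneg,
    fun j => ?_, ?_⟩
  · have hU := congrFun₂ (mem_unitaryGroup_iff'.mp hρ.1.eigenvectorUnitary.2) j j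
    rwa [mul_apply, one_apply_eq] at hU
  · rw [← mul_diagonal_mul_conjTranspose]
    exact hspec.symm

namespace IsPureEnsemble

lemma sum_weights {q : J → ℝ} {φ : J → n → ℂ} {ρ : Matrix n n ℂ} (h : IsPureEnsemble q φ ρ) :
    ((∑ j, q j : ℝ) : ℂ) = ρ.trace := by
  simp only [← h.sum_eq, trace_sum, trace_smul, trace_vecMulVec, dotProduct_comm _ (star _),
    h.unit, Complex.real_smul, mul_one, Complex.ofReal_sum]

lemma kronecker {q : I → ℝ} {a : I → m → ℂ} {ρ : Matrix m m ℂ} (hρ : IsPureEnsemble q a ρ)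
    {r : J → ℝ} {b : J → n → ℂ} {σ : Matrix n n ℂ} (hσ : IsPureEnsemble r b σ) :
    IsPureEnsemble (fun i : I × J => q i.1 * r i.2) (fun i => prodVec (a i.1) (b i.2))
      (ρ ⊗ₖ σ) where
  nonneg i := mul_nonneg (hρ.nonneg _) (hσ.nonneg _)
  unit i := by rw [star_prodVec_dotProduct, hρ.unit, hσ.unit, one_mul]
  sum_eq := by
    ext i j
    simp only [← hρ.sum_eq, ← hσ.sum_eq, vecMulVec_prodVec, Fintype.sum_prod_type,
      kroneckerMap_apply, Matrix.sum_apply, Matrix.smul_apply,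
      Finset.sum_mul_sum, smul_mul_smul_comm]

lemma mix {p : I → ℝ} (hp : ∀ i, 0 ≤ p i) {q : I → J → ℝ} {φ : I → J → n → ℂ}
    {ρ : I → Matrix n n ℂ} (h : ∀ i, IsPureEnsemble (q i) (φ i) (ρ i)) :
    IsPureEnsemble (fun j : I × J => p j.1 * q j.1 j.2) (fun j => φ j.1 j.2)
      (∑ i, p i • ρ i) where
  nonneg j := mul_nonneg (hp _) ((h _).nonneg _)
  unit j := (h _).unit _
  sum_eq := by
    simp only [Fintype.sum_prod_type, mul_smul, ← Finset.smul_sum, (h _).sum_eq]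

lemma sum_re_star_dotProduct_mulVec {q : J → ℝ} {φ : J → n → ℂ} {ρ : Matrix n n ℂ}
    (h : IsPureEnsemble q φ ρ) (X : Matrix n n ℂ) :
    ∑ j, q j * (star (X *ᵥ φ j) ⬝ᵥ (X *ᵥ φ j)).re = (X * ρ * Xᴴ).trace.re := by
  simp only [← h.sum_eq, Matrix.mul_sum, Matrix.sum_mul, Matrix.mul_smul, Matrix.smul_mul,
    mul_vecMulVec, vecMulVec_mul, ← star_mulVec, trace_sum, trace_smul, trace_vecMulVec,
    dotProduct_comm _ (star _), Complex.re_sum, Complex.smul_re, smul_eq_mul]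

lemma trace_sub_trace_le_sum_pureVariance {q : J → ℝ} {φ : J → n → ℂ} {ρ : Matrix n n ℂ}
    (h : IsPureEnsemble q φ ρ) (A : Matrix n n ℂ) {S : Matrix n n ℂ} (hS : Sᴴ = -S) :
    (A * ρ * Aᴴ).trace.re - ((A + S) * ρ * (A + S)ᴴ).trace.re
      ≤ ∑ j, q j * pureVariance (φ j) A := by
  rw [← h.sum_re_star_dotProduct_mulVec, ← h.sum_re_star_dotProduct_mulVec,
    ← Finset.sum_sub_distrib]
  refine Finset.sum_le_sum fun j _ => ?_
  have hmean : (star (φ j) ⬝ᵥ (A *ᵥ φ j)).re = (star (φ j) ⬝ᵥ ((A + S) *ᵥ φ j)).re := by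
    rw [add_mulVec, dotProduct_add, Complex.add_re, re_star_dotProduct_mulVec_eq_zero hS, add_zero]
  have hCS := sq_re_star_dotProduct_le (φ j) ((A + S) *ᵥ φ j)
  rw [h.unit, Complex.one_re, one_mul, ← hmean] at hCS
  rw [← mul_sub, pureVariance]
  exact mul_le_mul_of_nonneg_left (sub_le_sub_left hCS _) (h.nonneg j)

end IsPureEnsemble

end PureEnsemble

section QFI

variable {n : Type*}

/-- The matrix `(2i)⁻¹ L` in the eigenbasis of the state, where `L` is the symmetric logarithmic
derivative of the unitary orbit `exp (-iθB) ρ exp (iθB)` at `θ = 0` and `lam` are the eigenvalues of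
`ρ`. Entries with `lam k + lam l = 0` are `0`, since `x / 0 = 0`. -/
noncomputable def sldSkew (lam : n → ℝ) (B : Matrix n n ℂ) : Matrix n n ℂ :=
  of fun k l => (((lam k - lam l) / (lam k + lam l) : ℝ) : ℂ) * B k l

lemma conjTranspose_sldSkew (lam : n → ℝ) {B : Matrix n n ℂ} (hB : B.IsHermitian) :
    (sldSkew lam B)ᴴ = -sldSkew lam B := by
  ext k l
  simp only [sldSkew, conjTranspose_apply, Matrix.neg_apply, of_apply, star_mul', hB.apply,
    Complex.star_def, Complex.conj_ofReal]
  rw [← neg_mul, ← Complex.ofReal_neg, ← neg_div, neg_sub, add_comm (lam l)]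

variable [Fintype n] [DecidableEq n]

lemma re_trace_mul_diagonal_mul_conjTranspose (B : Matrix n n ℂ) (lam : n → ℝ) :
    (B * diagonal (fun k => (lam k : ℂ)) * Bᴴ).trace.re = ∑ k, ∑ l, lam l * ‖B k l‖ ^ 2 := by
  simp only [trace, diag_apply, Matrix.mul_apply (N := Bᴴ), mul_diagonal,
    conjTranspose_apply, Complex.re_sum]
  refine Finset.sum_congr rfl fun k _ => Finset.sum_congr rfl fun l _ => ?_
  rw [mul_right_comm, Complex.star_def, Complex.mul_conj', mul_comm, Complex.re_ofReal_mul,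
    ← Complex.ofReal_pow, Complex.ofReal_re]

lemma sum_qfi_weight_eq_trace_sub_trace (lam : n → ℝ) {B : Matrix n n ℂ} (hB : B.IsHermitian) :
    ∑ k, ∑ l, (lam k - lam l) ^ 2 / (2 * (lam k + lam l)) * ‖B k l‖ ^ 2
      = (B * diagonal (fun k => (lam k : ℂ)) * Bᴴ).trace.re
        - ((B + sldSkew lam B) * diagonal (fun k => (lam k : ℂ))
            * (B + sldSkew lam B)ᴴ).trace.re := by
  set t : n → n → ℝ := fun k l => (lam k - lam l) / (lam k + lam l)
  set f : n → n → ℝ := fun k l => lam l * (1 - (1 + t k l) ^ 2) * ‖B k l‖ ^ 2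
  have hnorm : ∀ k l, ‖(B + sldSkew lam B) k l‖ ^ 2 = (1 + t k l) ^ 2 * ‖B k l‖ ^ 2 := by
    intro k l
    have hentry : (B + sldSkew lam B) k l = ((1 + t k l : ℝ) : ℂ) * B k l := by
      rw [Matrix.add_apply, sldSkew, of_apply, Complex.ofReal_add, Complex.ofReal_one, add_mul,
        one_mul]
    rw [hentry, norm_mul, mul_pow, Complex.norm_real, Real.norm_eq_abs, sq_abs]
  have hsymm : ∀ k l, (lam k - lam l) ^ 2 / (2 * (lam k + lam l)) * ‖B k l‖ ^ 2
      = (f k l + f l k) / 2 := by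
    intro k l
    have hswap : ‖B l k‖ = ‖B k l‖ := by rw [← hB.apply k l, norm_star]
    simp only [f, t, hswap]
    rcases eq_or_ne (lam k + lam l) 0 with h0 | h0
    · rw [add_comm (lam l), h0]
      simp
    · rw [add_comm (lam l)]
      field_simp
      ring
  calc ∑ k, ∑ l, (lam k - lam l) ^ 2 / (2 * (lam k + lam l)) * ‖B k l‖ ^ 2
      = (∑ k, ∑ l, f k l + ∑ k, ∑ l, f l k) / 2 := by
        simp only [hsymm, ← Finset.sum_div, Finset.sum_add_distrib]
    _ = ∑ k, ∑ l, f k l := by rw [Finset.sum_comm (f := fun k l => f l k), add_self_div_two]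
    _ = _ := by
        simp only [re_trace_mul_diagonal_mul_conjTranspose, hnorm, ← Finset.sum_sub_distrib, f]
        refine Finset.sum_congr rfl fun k _ => Finset.sum_congr rfl fun l _ => ?_
        ring

lemma trace_conj_mul_conj_mul_conj {V : Matrix n n ℂ} (hV : Vᴴ * V = 1) (Y D : Matrix n n ℂ) :
    (V * Y * Vᴴ * (V * D * Vᴴ) * (V * Y * Vᴴ)ᴴ).trace = (Y * D * Yᴴ).trace := by
  have hcancel : ∀ Z, Vᴴ * (V * Z) = Z := fun Z => by rw [← Matrix.mul_assoc, hV, Matrix.one_mul]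
  have hconj : V * Y * Vᴴ * (V * D * Vᴴ) * (V * Y * Vᴴ)ᴴ = V * (Y * D * Yᴴ * Vᴴ) := by
    simp only [conjTranspose_mul, conjTranspose_conjTranspose, Matrix.mul_assoc, hcancel]
  rw [hconj, trace_mul_comm, Matrix.mul_assoc, hV, Matrix.mul_one]

theorem qfi_le_sum_pureVariance {J : Type*} [Fintype J] {lam : n → ℝ} {v : n → n → ℂ}
    (hortho : ∀ k l, star (v k) ⬝ᵥ v l = if k = l then 1 else 0)
    {q : J → ℝ} {φ : J → n → ℂ}
    (h : IsPureEnsemble q φ (∑ k, lam k • vecMulVec (v k) (star (v k))))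
    {A : Matrix n n ℂ} (hA : A.IsHermitian) :
    qfi lam v A ≤ ∑ j, q j * pureVariance (φ j) A := by
  set V : Matrix n n ℂ := (of v)ᵀ
  set D : Matrix n n ℂ := diagonal fun k => (lam k : ℂ)
  set B : Matrix n n ℂ := Vᴴ * A * V
  set S : Matrix n n ℂ := sldSkew lam B
  have hV : Vᴴ * V = 1 := by
    ext k l
    rw [one_apply, ← hortho k l]
    rfl
  have hV' : V * Vᴴ = 1 := mul_eq_one_comm.mp hV
  have hB : B.IsHermitian := isHermitian_conjTranspose_mul_mul V hA
  have hAB : V * B * Vᴴ = A := by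
    simp only [B, ← Matrix.mul_assoc, hV', Matrix.one_mul]
    rw [Matrix.mul_assoc, hV', Matrix.mul_one]
  have hS : (V * S * Vᴴ)ᴴ = -(V * S * Vᴴ) := by
    simp only [conjTranspose_mul, conjTranspose_conjTranspose, S, conjTranspose_sldSkew lam hB,
      Matrix.mul_assoc, Matrix.neg_mul, Matrix.mul_neg]
  have hρ : V * D * Vᴴ = ∑ k, lam k • vecMulVec (v k) (star (v k)) :=
    mul_diagonal_mul_conjTranspose V lam
  rw [← hρ] at h
  calc qfi lam v A = ∑ k, ∑ l, (lam k - lam l) ^ 2 / (2 * (lam k + lam l)) * ‖B k l‖ ^ 2 := by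
        simp only [qfi, B, mul_mul_apply]
        rfl
    _ = (B * D * Bᴴ).trace.re - ((B + S) * D * (B + S)ᴴ).trace.re :=
        sum_qfi_weight_eq_trace_sub_trace lam hB
    _ = (A * (V * D * Vᴴ) * Aᴴ).trace.re
        - ((A + V * S * Vᴴ) * (V * D * Vᴴ) * (A + V * S * Vᴴ)ᴴ).trace.re := by
        rw [← trace_conj_mul_conj_mul_conj hV B, ← trace_conj_mul_conj_mul_conj hV (B + S),
          Matrix.mul_add, Matrix.add_mul, hAB]
    _ ≤ ∑ j, q j * pureVariance (φ j) A := h.trace_sub_trace_le_sum_pureVariance A hS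

end QFI

section Separable

variable {m n ι K : Type*} [Fintype m] [Fintype n] [DecidableEq m] [DecidableEq n] [Fintype ι]
  [Fintype K]

open ComplexOrder in
theorem sum_qfi_local_le_of_separable {p : K → ℝ} (hp : ∀ k, 0 ≤ p k) (hp1 : ∑ k, p k = 1)
    {ρA : K → Matrix m m ℂ} {ρB : K → Matrix n n ℂ}
    (hρA : ∀ k, (ρA k).PosSemidef) (htrA : ∀ k, (ρA k).trace = 1)
    (hρB : ∀ k, (ρB k).PosSemidef) (htrB : ∀ k, (ρB k).trace = 1)
    {A : ι → Matrix m m ℂ} {B : ι → Matrix n n ℂ}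
    (hA : ∀ μ, (A μ).IsHermitian) (hB : ∀ μ, (B μ).IsHermitian) {sA sB : ℝ}
    (hsA : ∀ a, star a ⬝ᵥ a = 1 → ∑ μ, pureVariance a (A μ) ≤ sA)
    (hsB : ∀ b, star b ⬝ᵥ b = 1 → ∑ μ, pureVariance b (B μ) ≤ sB)
    {lam : m × n → ℝ} {v : m × n → m × n → ℂ}
    (hortho : ∀ k l, star (v k) ⬝ᵥ v l = if k = l then 1 else 0)
    (hsep : ∑ k, lam k • vecMulVec (v k) (star (v k)) = ∑ k, p k • (ρA k ⊗ₖ ρB k)) :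
    ∑ μ, qfi lam v (A μ ⊗ₖ 1 + 1 ⊗ₖ B μ) ≤ sA + sB := by
  choose qA a ha using fun k => exists_isPureEnsemble (hρA k)
  choose qB b hb using fun k => exists_isPureEnsemble (hρB k)
  have hens := IsPureEnsemble.mix hp fun k => (ha k).kronecker (hb k)
  set q : K × m × n → ℝ := fun j => p j.1 * (qA j.1 j.2.1 * qB j.1 j.2.2)
  have hq1 : ∑ j, q j = 1 := by
    have htr := hens.sum_weights
    simp only [trace_sum, trace_smul, trace_kronecker, htrA, htrB, mul_one, ← Finset.sum_smul, hp1,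
      one_smul] at htr
    exact_mod_cast htr
  have hherm : ∀ μ, (A μ ⊗ₖ 1 + 1 ⊗ₖ B μ).IsHermitian := fun μ => by
    rw [IsHermitian, conjTranspose_add, conjTranspose_kronecker, conjTranspose_kronecker,
      conjTranspose_one, conjTranspose_one, hA, hB]
  calc ∑ μ, qfi lam v (A μ ⊗ₖ 1 + 1 ⊗ₖ B μ)
      ≤ ∑ μ, ∑ j, q j * pureVariance (prodVec (a j.1 j.2.1) (b j.1 j.2.2))
          (A μ ⊗ₖ 1 + 1 ⊗ₖ B μ) :=
        Finset.sum_le_sum fun μ _ => qfi_le_sum_pureVariance hortho (hsep ▸ hens) (hherm μ)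
    _ = ∑ j, q j * (∑ μ, pureVariance (a j.1 j.2.1) (A μ)
          + ∑ μ, pureVariance (b j.1 j.2.2) (B μ)) := by
        rw [Finset.sum_comm]
        simp only [pureVariance_prodVec ((ha _).unit _) ((hb _).unit _) (hA _),
          ← Finset.mul_sum, Finset.sum_add_distrib]
    _ ≤ ∑ j, q j * (sA + sB) := by
        gcongr with j
        · exact hens.nonneg j
        · exact hsA _ ((ha _).unit _)
        · exact hsB _ ((hb _).unit _)
    _ = sA + sB := by rw [← Finset.sum_mul, hq1, one_mul]

end Separable

section SIC

variable {n ι : Type*} [Fintype n] [Fintype ι] [DecidableEq ι]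

/-- The `d ^ 2` vectors `ψ` form a SIC in dimension `d = Fintype.card n`. The case `μ = ν` of
`overlap` says that they are unit vectors. -/
structure IsSIC (ψ : ι → n → ℂ) : Prop where
  card_eq : Fintype.card ι = Fintype.card n ^ 2
  overlap : ∀ μ ν, ‖star (ψ μ) ⬝ᵥ ψ ν‖ ^ 2
    = ((Fintype.card n : ℝ) * (if μ = ν then 1 else 0) + 1) / (Fintype.card n + 1)

/-- The effects `|ψ μ⟩⟨ψ μ| / d` of the POVM built from the vectors `ψ` in dimension
`d = Fintype.card n`. -/
noncomputable def sicEffect (ψ : ι → n → ℂ) (μ : ι) : Matrix n n ℂ :=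
  (Fintype.card n : ℂ)⁻¹ • vecMulVec (ψ μ) (star (ψ μ))

lemma isHermitian_sicEffect {n ι : Type*} [Fintype n] (ψ : ι → n → ℂ) (μ : ι) :
    (sicEffect ψ μ).IsHermitian :=
  (isHermitian_vecMulVec_star _).smul (by simp [IsSelfAdjoint])

namespace IsSIC

variable {ψ : ι → n → ℂ} (hψ : IsSIC ψ)

include hψ

open ComplexOrder in
lemma unit (μ : ι) : star (ψ μ) ⬝ᵥ ψ μ = 1 := by
  have hd : (Fintype.card n : ℝ) + 1 ≠ 0 := by positivity
  have hsq := hψ.overlap μ μ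
  rw [if_pos rfl, mul_one, div_self hd, pow_eq_one_iff_of_nonneg (norm_nonneg _) two_ne_zero] at hsq
  rw [Complex.eq_coe_norm_of_nonneg (dotProduct_star_self_nonneg (ψ μ)), hsq, Complex.ofReal_one]

lemma star_dotProduct_sum_smul_mulVec (g : ι → ℂ) (ν : ι) :
    (Fintype.card n + 1 : ℂ)
        * (star (ψ ν) ⬝ᵥ ((∑ μ, g μ • vecMulVec (ψ μ) (star (ψ μ))) *ᵥ ψ ν))
      = Fintype.card n * g ν + ∑ μ, g μ := by
  have hd : (Fintype.card n : ℂ) + 1 ≠ 0 := Nat.cast_add_one_ne_zero _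
  simp only [Matrix.sum_mulVec, dotProduct_sum, smul_mulVec, dotProduct_smul, smul_eq_mul,
    star_dotProduct_vecMulVec_mulVec, star_dotProduct_mul_comm, hψ.overlap, Finset.mul_sum]
  have hterm : ∀ μ, (Fintype.card n + 1 : ℂ)
      * (g μ * (((Fintype.card n * (if ν = μ then 1 else 0) + 1) / (Fintype.card n + 1) : ℝ) : ℂ))
      = (if ν = μ then Fintype.card n * g μ else 0) + g μ := by
    intro μ
    push_cast
    rw [mul_left_comm, mul_div_cancel₀ _ hd]
    split_ifs
    · rw [Complex.ofReal_one]; ring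
    · rw [Complex.ofReal_zero]; ring
  simp only [hterm, Finset.sum_add_distrib, Finset.sum_ite_eq, Finset.mem_univ, if_true]

lemma trace_sum_smul (g : ι → ℂ) :
    (∑ μ, g μ • vecMulVec (ψ μ) (star (ψ μ))).trace = ∑ μ, g μ := by
  simp only [trace_sum, trace_smul, trace_vecMulVec, dotProduct_comm _ (star _), hψ.unit,
    smul_eq_mul, mul_one]

section Nonempty

variable [Nonempty n]

lemma linearIndependent : LinearIndependent ℂ fun μ => vecMulVec (ψ μ) (star (ψ μ)) := by
  rw [Fintype.linearIndependent_iff]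
  intro g hg ν
  have hpair := hψ.star_dotProduct_sum_smul_mulVec g ν
  rw [← hψ.trace_sum_smul, hg, zero_mulVec, dotProduct_zero, mul_zero, trace_zero, add_zero,
    eq_comm] at hpair
  exact (mul_eq_zero.mp hpair).resolve_left (Nat.cast_ne_zero.mpr Fintype.card_ne_zero)

lemma exists_sum_smul_eq (B : Matrix n n ℂ) :
    ∃ g : ι → ℂ, ∑ μ, g μ • vecMulVec (ψ μ) (star (ψ μ)) = B := by
  have hspan := hψ.linearIndependent.span_eq_top_of_card_eq_finrank'
    (by rw [Module.finrank_matrix, Module.finrank_self, mul_one, hψ.card_eq, sq])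
  exact (Submodule.mem_span_range_iff_exists_fun ℂ).mp (hspan ▸ Submodule.mem_top)

lemma sum_expectation_smul_eq (B : Matrix n n ℂ) :
    (Fintype.card n + 1 : ℂ)
        • ∑ μ, (star (ψ μ) ⬝ᵥ (B *ᵥ ψ μ)) • vecMulVec (ψ μ) (star (ψ μ))
      = (Fintype.card n : ℂ) • B + B.trace • ∑ μ, vecMulVec (ψ μ) (star (ψ μ)) := by
  obtain ⟨g, hg⟩ := hψ.exists_sum_smul_eq B
  have hpair := hψ.star_dotProduct_sum_smul_mulVec g
  rw [hg, ← hψ.trace_sum_smul, hg] at hpair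
  simp only [Finset.smul_sum, smul_smul, hpair, add_smul, Finset.sum_add_distrib]
  simp only [mul_smul, ← Finset.smul_sum, hg]

lemma sum_vecMulVec_star [DecidableEq n] :
    ∑ μ, vecMulVec (ψ μ) (star (ψ μ)) = (Fintype.card n : ℂ) • (1 : Matrix n n ℂ) := by
  have h := hψ.sum_expectation_smul_eq 1
  rw [trace_one, add_smul, add_comm] at h
  simpa only [one_mulVec, hψ.unit, one_smul, add_left_inj] using h

end Nonempty

variable {a : n → ℂ} (ha : star a ⬝ᵥ a = 1)

include ha

lemma sum_sq_norm_dotProduct : ∑ μ, ‖star (ψ μ) ⬝ᵥ a‖ ^ 2 = Fintype.card n := by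
  classical
  have := nonempty_of_star_dotProduct_self_eq_one ha
  have h := congrArg (fun M => star a ⬝ᵥ (M *ᵥ a)) hψ.sum_vecMulVec_star
  simp only [Matrix.sum_mulVec, dotProduct_sum, star_dotProduct_vecMulVec_mulVec,
    mul_comm (star a ⬝ᵥ _), star_dotProduct_mul_comm, smul_mulVec, one_mulVec, dotProduct_smul, ha,
    smul_eq_mul, mul_one] at h
  exact_mod_cast h

lemma sum_sq_norm_dotProduct_sq :
    ∑ μ, (‖star (ψ μ) ⬝ᵥ a‖ ^ 2) ^ 2 = 2 * (Fintype.card n : ℝ) / (Fintype.card n + 1) := by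
  classical
  have := nonempty_of_star_dotProduct_self_eq_one ha
  have h := congrArg (fun M => star a ⬝ᵥ (M *ᵥ a))
    (hψ.sum_expectation_smul_eq (vecMulVec a (star a)))
  simp only [hψ.sum_vecMulVec_star, trace_vecMulVec, dotProduct_comm a, add_mulVec, dotProduct_add,
    Matrix.sum_mulVec, dotProduct_sum, smul_mulVec, one_mulVec, dotProduct_smul,
    star_dotProduct_vecMulVec_mulVec, mul_comm (star a ⬝ᵥ _), star_dotProduct_mul_comm, ha,
    smul_eq_mul, mul_one, ← sq, one_pow, one_mul] at h
  rw [eq_div_iff (Nat.cast_add_one_ne_zero _), mul_comm, two_mul]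
  exact_mod_cast h

lemma sum_pureVariance_sicEffect : ∑ μ, pureVariance a (sicEffect ψ μ)
    = ((Fintype.card n : ℝ) - 1) / (Fintype.card n * (Fintype.card n + 1)) := by
  have := nonempty_of_star_dotProduct_self_eq_one ha
  have hd : (Fintype.card n : ℝ) ≠ 0 := Nat.cast_ne_zero.mpr Fintype.card_ne_zero
  have hd1 : (Fintype.card n : ℝ) + 1 ≠ 0 := Nat.cast_add_one_ne_zero _
  have hvar : ∀ μ, pureVariance a (sicEffect ψ μ) = (Fintype.card n : ℝ)⁻¹ ^ 2
      * (‖star (ψ μ) ⬝ᵥ a‖ ^ 2 - (‖star (ψ μ) ⬝ᵥ a‖ ^ 2) ^ 2) := fun μ => by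
    rw [← pureVariance_vecMulVec_star (hψ.unit μ), ← pureVariance_ofReal_smul, sicEffect,
      Complex.ofReal_inv, Complex.ofReal_natCast]
  simp only [hvar, ← Finset.mul_sum, Finset.sum_sub_distrib, hψ.sum_sq_norm_dotProduct ha,
    hψ.sum_sq_norm_dotProduct_sq ha]
  field_simp
  ring

end IsSIC

end SIC

open ComplexOrder in
/-- Some `lam k` may be zero: the summands of `qfi` with `lam k + lam l = 0` are then `0` because
`x / 0 = 0`, which is the usual convention for states without full rank. -/
theorem total_qfi_sic_separable_bound_general {n ι K : Type*} [Fintype n] [DecidableEq n]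
    [Fintype ι] [DecidableEq ι] [Fintype K]
    {p : K → ℝ} (hp : ∀ k, 0 ≤ p k) (hp1 : ∑ k, p k = 1) {ρA ρB : K → Matrix n n ℂ}
    (hρA : ∀ k, (ρA k).PosSemidef) (htrA : ∀ k, (ρA k).trace = 1)
    (hρB : ∀ k, (ρB k).PosSemidef) (htrB : ∀ k, (ρB k).trace = 1)
    {ψA ψB : ι → n → ℂ} (hA : IsSIC ψA) (hB : IsSIC ψB)
    {lam : n × n → ℝ} {v : n × n → n × n → ℂ}
    (hortho : ∀ k l, star (v k) ⬝ᵥ v l = if k = l then 1 else 0)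
    (hsep : ∑ k, lam k • vecMulVec (v k) (star (v k)) = ∑ k, p k • (ρA k ⊗ₖ ρB k)) :
    ∑ μ, qfi lam v (sicEffect ψA μ ⊗ₖ 1 + 1 ⊗ₖ sicEffect ψB μ)
      ≤ 2 * ((Fintype.card n : ℝ) - 1) / (Fintype.card n * (Fintype.card n + 1)) := by
  rw [mul_div_assoc, two_mul]
  exact sum_qfi_local_le_of_separable hp hp1 hρA htrA hρB htrB (isHermitian_sicEffect ψA)
    (isHermitian_sicEffect ψB) (fun _ ha => (hA.sum_pureVariance_sicEffect ha).le)
    (fun _ hb => (hB.sum_pureVariance_sicEffect hb).le) hortho hsep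

open ComplexOrder in
theorem total_qfi_sic_separable_bound {d K : ℕ} (hd : 0 < d)
    (p : Fin K → ℝ) (hp : ∀ k, 0 ≤ p k) (hp1 : ∑ k, p k = 1)
    (ρA ρB : Fin K → Matrix (Fin d) (Fin d) ℂ)
    (hρA : ∀ k, (ρA k).PosSemidef) (htrA : ∀ k, (ρA k).trace = 1)
    (hρB : ∀ k, (ρB k).PosSemidef) (htrB : ∀ k, (ρB k).trace = 1)
    (ψA ψB : Fin (d ^ 2) → Fin d → ℂ)
    (hoverA : ∀ μ ν, ‖star (ψA μ) ⬝ᵥ ψA ν‖ ^ 2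
      = ((d : ℝ) * (if μ = ν then 1 else 0) + 1) / (d + 1))
    (hoverB : ∀ μ ν, ‖star (ψB μ) ⬝ᵥ ψB ν‖ ^ 2
      = ((d : ℝ) * (if μ = ν then 1 else 0) + 1) / (d + 1))
    (EA EB : Fin (d ^ 2) → Matrix (Fin d) (Fin d) ℂ)
    (hEA : ∀ μ, EA μ = ((d : ℂ))⁻¹ • vecMulVec (ψA μ) (star (ψA μ)))
    (hEB : ∀ μ, EB μ = ((d : ℂ))⁻¹ • vecMulVec (ψB μ) (star (ψB μ)))
    (lam : Fin d × Fin d → ℝ) (v : Fin d × Fin d → Fin d × Fin d → ℂ)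
    (hpos : ∀ k, 0 < lam k)
    (hortho : ∀ k l, star (v k) ⬝ᵥ v l = if k = l then 1 else 0)
    (hsep : ∑ k, lam k • vecMulVec (v k) (star (v k)) = ∑ k, p k • (ρA k ⊗ₖ ρB k)) :
    ∑ μ, qfi lam v (EA μ ⊗ₖ (1 : Matrix (Fin d) (Fin d) ℂ)
      + (1 : Matrix (Fin d) (Fin d) ℂ) ⊗ₖ EB μ) ≤ 2 * ((d : ℝ) - 1) / (d * (d + 1)) := by
  simpa only [sicEffect, hEA, hEB, Fintype.card_fin] using
    total_qfi_sic_separable_bound_general hp hp1 hρA htrA hρB htrB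
      (ψA := ψA) (ψB := ψB) ⟨by simp, by simpa using hoverA⟩ ⟨by simp, by simpa using hoverB⟩
      hortho hsep
end
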